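/- arXiv:1902.09790 — 7 statements merged into one kernel-verified Lean document; each statement's English description precedes it below -/
import Mathlib

section
/- Let X₀ and X₁ be independent random variables, each exponentially distributed with rate 1, and let (aₙ) be the Fibonacci sequence. For every n ≥ 3, the random variable Xₙ = a_{n-1}·X₀ + aₙ·X₁ has probability density function fₙ(x) = (1/a_{n-2}) · ( exp(x·a_{n-2}/(a_{n-1}·aₙ)) − 1 ) · exp(−x/a_{n-1}) for x ≥ 0, and fₙ(x) = 0 for x < 0. Moreover X₂ = X₀ + X₁ has density f₂(x) = x·e^{−x} for x ≥ 0 and 0 for x < 0. -/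
/-!
For `c > 0`, multiplying an exponential variable of rate `1` by `c` gives an exponential variable
of rate `c⁻¹` (`map_mul_expMeasure_one`). By independence the law of `p X₀ + q X₁` is therefore the
convolution of the exponential laws of rates `p⁻¹` and `q⁻¹`, whose density at `x ≥ 0` is
`∫₀ˣ r e^{-ry} s e^{-s(x-y)} dy` with `r = p⁻¹`, `s = q⁻¹`, and `0` for `x < 0`
(`expMeasure_conv_expMeasure`). An explicit antiderivative of the integrand evaluates this in the
two cases `r ≠ s` and `r = s = 1`. For `n ≥ 3` one has `p = a_{n-1} < q = a_n`, with
`q - p = a_{n-2} > 0`, and the integral is `(e^{-x/q} - e^{-x/p}) / (q - p)`.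
-/

open MeasureTheory ProbabilityTheory

lemma map_mul_expMeasure_one {c : ℝ} (hc : 0 < c) :
    (expMeasure 1).map (fun x => c * x) = expMeasure c⁻¹ := by
  have hm : ∀ r, Measurable (exponentialPDF r) := fun r =>
    (measurable_exponentialPDFReal r).ennreal_ofReal
  refine Measure.ext_of_lintegral _ fun φ hφ => ?_
  change ∫⁻ x, φ x ∂(((volume : Measure ℝ).withDensity (exponentialPDF 1)).map _)
    = ∫⁻ x, φ x ∂((volume : Measure ℝ).withDensity (exponentialPDF c⁻¹))
  rw [lintegral_map hφ (by fun_prop),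
    lintegral_withDensity_eq_lintegral_mul _ (hm _) (by fun_prop),
    lintegral_withDensity_eq_lintegral_mul _ (hm _) hφ]
  have hpdf : ∀ x, exponentialPDF c⁻¹ x = ENNReal.ofReal c⁻¹ * exponentialPDF 1 (c⁻¹ * x) := by
    intro x
    rw [exponentialPDF_eq, exponentialPDF_eq, ← ENNReal.ofReal_mul (by positivity)]
    have : 0 ≤ c⁻¹ * x ↔ 0 ≤ x := mul_nonneg_iff_of_pos_left (by positivity)
    simp [this]
  have hm1 := hm 1
  have key : ∫⁻ y, exponentialPDF 1 (c⁻¹ * y) * φ y ∂((volume : Measure ℝ).map (c * ·))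
      = ∫⁻ x, exponentialPDF 1 x * φ (c * x) := by
    rw [lintegral_map (by fun_prop) (by fun_prop)]
    simp [inv_mul_cancel_left₀ hc.ne']
  simp only [Pi.mul_apply, hpdf, mul_assoc]
  rw [← key, Real.map_volume_mul_left hc.ne', lintegral_smul_measure,
    lintegral_const_mul _ (by fun_prop), abs_of_pos (by positivity), smul_eq_mul]

/-- The convolution of two exponential laws, in terms of a family `F x` of antiderivatives of the
integrand of the convolution integral at `x`. -/
lemma expMeasure_conv_expMeasure {r s : ℝ} (hr : 0 < r) (hs : 0 < s) (F : ℝ → ℝ → ℝ)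
    (hF : ∀ x y, HasDerivAt (F x)
      (r * Real.exp (-(r * y)) * (s * Real.exp (-(s * (x - y))))) y) :
    expMeasure r ∗ expMeasure s = (volume : Measure ℝ).withDensity
      (fun x => ENNReal.ofReal (if 0 ≤ x then F x x - F x 0 else 0)) := by
  have hm : ∀ r, Measurable (exponentialPDF r) := fun r =>
    (measurable_exponentialPDFReal r).ennreal_ofReal
  change (volume : Measure ℝ).withDensity (exponentialPDF r) ∗
    (volume : Measure ℝ).withDensity (exponentialPDF s) = _
  rw [conv_withDensity_eq_lconvolution (hm r) (hm s)]
  congr 1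
  ext x
  rw [lconvolution_def]
  have hind : (fun y => exponentialPDF r y * exponentialPDF s (-y + x))
      = (Set.Icc 0 x).indicator (fun y => ENNReal.ofReal
        (r * Real.exp (-(r * y)) * (s * Real.exp (-(s * (x - y)))))) := by
    ext y
    by_cases hy : y ∈ Set.Icc 0 x
    · rw [Set.indicator_of_mem hy, exponentialPDF_of_nonneg hy.1,
        exponentialPDF_of_nonneg (by linarith [hy.2]), ← ENNReal.ofReal_mul (by positivity),
        neg_add_eq_sub]
    · rw [Set.indicator_of_notMem hy]
      rcases lt_or_ge y 0 with h | h
      · rw [exponentialPDF_of_neg h, zero_mul]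
      · have : x < y := not_le.1 fun h' => hy ⟨h, h'⟩
        rw [exponentialPDF_of_neg (by linarith : -y + x < 0), mul_zero]
  rw [hind, lintegral_indicator measurableSet_Icc]
  split_ifs with hx
  · have hcont : Continuous fun y =>
        r * Real.exp (-(r * y)) * (s * Real.exp (-(s * (x - y)))) := by fun_prop
    rw [← ofReal_integral_eq_lintegral_ofReal hcont.continuousOn.integrableOn_Icc
      (Filter.Eventually.of_forall fun y => by dsimp; positivity),
      integral_Icc_eq_integral_Ioc, ← intervalIntegral.integral_of_le hx,
      intervalIntegral.integral_eq_sub_of_hasDerivAt (fun y _ => hF x y)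
        (hcont.intervalIntegrable _ _)]
  · simp [Set.Icc_eq_empty hx]

/-- The law of `p X₀ + q X₁`, in terms of a family of antiderivatives of the integrand of the
convolution integral. -/
lemma map_linear_combination {Ω : Type*} [MeasurableSpace Ω] {P : Measure Ω}
    [IsProbabilityMeasure P] {X₀ X₁ : Ω → ℝ} (hX₀ : Measurable X₀) (hX₁ : Measurable X₁)
    (hindep : IndepFun X₀ X₁ P) (h₀ : P.map X₀ = expMeasure 1) (h₁ : P.map X₁ = expMeasure 1)
    {p q : ℝ} (hp : 0 < p) (hq : 0 < q) (F : ℝ → ℝ → ℝ)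
    (hF : ∀ x y, HasDerivAt (F x)
      (p⁻¹ * Real.exp (-(p⁻¹ * y)) * (q⁻¹ * Real.exp (-(q⁻¹ * (x - y))))) y) :
    P.map (fun ω => p * X₀ ω + q * X₁ ω) = (volume : Measure ℝ).withDensity
      (fun x => ENNReal.ofReal (if 0 ≤ x then F x x - F x 0 else 0)) := by
  have hmul : ∀ c : ℝ, Measurable fun x => c * x := fun c => by fun_prop
  rw [← expMeasure_conv_expMeasure (inv_pos.2 hp) (inv_pos.2 hq) F hF,
    ← map_mul_expMeasure_one hp, ← map_mul_expMeasure_one hq]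
  nth_rw 1 [← h₀]
  rw [← h₁, Measure.map_map (hmul p) hX₀, Measure.map_map (hmul q) hX₁]
  exact (hindep.comp (hmul p) (hmul q)).map_add_eq_map_conv_map
    ((hmul p).comp hX₀) ((hmul q).comp hX₁)

/-- The pdf of `Xₙ = a_{n-1} X₀ + aₙ X₁` when `X₀, X₁` are iid exponential(1). -/
theorem fsrv_pdf_exponential {Ω : Type*} [MeasurableSpace Ω] (P : Measure Ω)
    [IsProbabilityMeasure P]
    (X₀ X₁ : Ω → ℝ) (hX₀ : Measurable X₀) (hX₁ : Measurable X₁)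
    (hindep : IndepFun X₀ X₁ P)
    (hdist₀ : Measure.map X₀ P = (volume : Measure ℝ).withDensity
      (fun x => ENNReal.ofReal (if 0 ≤ x then Real.exp (-x) else 0)))
    (hdist₁ : Measure.map X₁ P = (volume : Measure ℝ).withDensity
      (fun x => ENNReal.ofReal (if 0 ≤ x then Real.exp (-x) else 0))) :
    (∀ n : ℕ, 3 ≤ n →
      Measure.map (fun ω => (Nat.fib (n - 1) : ℝ) * X₀ ω + (Nat.fib n : ℝ) * X₁ ω) P
        = (volume : Measure ℝ).withDensity (fun x => ENNReal.ofReal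
            (if 0 ≤ x then
              (1 / (Nat.fib (n - 2) : ℝ)) *
                (Real.exp (x * (Nat.fib (n - 2) : ℝ) /
                  ((Nat.fib (n - 1) : ℝ) * (Nat.fib n : ℝ))) - 1) *
                Real.exp (-x / (Nat.fib (n - 1) : ℝ))
            else 0))) ∧
    Measure.map (fun ω => X₀ ω + X₁ ω) P
      = (volume : Measure ℝ).withDensity (fun x => ENNReal.ofReal
          (if 0 ≤ x then x * Real.exp (-x) else 0)) := by
  have hexp : (volume : Measure ℝ).withDensity
      (fun x => ENNReal.ofReal (if 0 ≤ x then Real.exp (-x) else 0)) = expMeasure 1 := by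
    change _ = (volume : Measure ℝ).withDensity (exponentialPDF 1)
    congr 1
    ext x
    simp [exponentialPDF_eq]
  rw [hexp] at hdist₀ hdist₁
  refine ⟨fun n hn => ?_, ?_⟩
  · obtain ⟨m, rfl⟩ : ∃ m, n = m + 3 := ⟨n - 3, by omega⟩
    have e1 : m + 3 - 1 = m + 2 := rfl
    have e2 : m + 3 - 2 = m + 1 := rfl
    rw [e1, e2]
    have hd : (0 : ℝ) < Nat.fib (m + 1) := by exact_mod_cast Nat.fib_pos.2 (by omega)
    have hp : (0 : ℝ) < Nat.fib (m + 2) := by exact_mod_cast Nat.fib_pos.2 (by omega)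
    have hq : (Nat.fib (m + 3) : ℝ) = Nat.fib (m + 1) + Nat.fib (m + 2) := by
      exact_mod_cast Nat.fib_add_two
    rw [hq]
    generalize (Nat.fib (m + 1) : ℝ) = d at *
    generalize (Nat.fib (m + 2) : ℝ) = p at *
    have hdp : 0 < d + p := by positivity
    -- The exponents of the integrand add up to `-x / q - y (1 / p - 1 / q)`, where
    -- `q = d + p` and `1 / p - 1 / q = d / (p q)`.
    rw [map_linear_combination hX₀ hX₁ hindep hdist₀ hdist₁ hp hdp
      (fun x y => -(1 / d) * Real.exp (-(p⁻¹ * y) + -((d + p)⁻¹ * (x - y)))) ?_]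
    · congr 1
      ext x
      congr 2
      have h1 : x * d / (p * (d + p)) = x / p - x / (d + p) := by field_simp; ring
      have h2 : Real.exp (x / p - x / (d + p)) * Real.exp (-x / p)
          = Real.exp (-(x / (d + p))) := by
        rw [← Real.exp_add]; congr 1; ring
      have h3 : -(p⁻¹ * x) + -((d + p)⁻¹ * (x - x)) = -x / p := by ring
      have h4 : -(p⁻¹ * 0) + -((d + p)⁻¹ * (x - 0)) = -(x / (d + p)) := by ring
      rw [h1, h3, h4, ← h2]
      ring
    · intro x y
      have h : HasDerivAt (fun y : ℝ => -(p⁻¹ * y) + -((d + p)⁻¹ * (x - y)))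
          (-(p⁻¹ * 1) + -((d + p)⁻¹ * (-1))) y :=
        ((hasDerivAt_id y).const_mul _).neg.add (((hasDerivAt_id y).const_sub x).const_mul _).neg
      refine (h.exp.const_mul (-(1 / d))).congr_deriv ?_
      rw [Real.exp_add]
      field_simp
      ring
  · have := map_linear_combination hX₀ hX₁ hindep hdist₀ hdist₁ one_pos one_pos
      (fun x y => y * Real.exp (-x)) (fun x y => by
        -- With equal rates the integrand does not depend on `y`.
        refine ((hasDerivAt_id y).mul_const (Real.exp (-x))).congr_deriv ?_
        rw [inv_one, one_mul, one_mul, one_mul, one_mul, one_mul, ← Real.exp_add]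
        congr 1
        ring)
    simpa using this
end

section
/- Let (aₙ) be the Fibonacci sequence and for n ≥ 3 let fₙ : ℝ → ℝ be defined by fₙ(x) = (1/a_{n-2}) · ( exp(x·a_{n-2}/(a_{n-1}·aₙ)) − 1 ) · exp(−x/a_{n-1}) for x ≥ 0 and fₙ(x) = 0 for x < 0 (the density of Xₙ when X₀, X₁ are iid exponential(1)). Then fₙ attains its maximum on (0, ∞) at the unique point xₙ* = a_{n-1}·aₙ·ln( aₙ/(aₙ − a_{n-2}) ) / a_{n-2}, and the maximum value is Mₙ = fₙ(xₙ*) = (1/(aₙ − a_{n-2})) · ( aₙ/(aₙ − a_{n-2}) )^{−aₙ/a_{n-2}}. -/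
open MeasureTheory Real

/-! Write `a = a_{n-2}`, `b = a_{n-1}`, `c = aₙ = a + b`. Then `c - a = b` and the density on
`[0, ∞)` is `a⁻¹ (e^{-x/c} - e^{-x/b})`. At the critical point `x* = b c log (c/b) / a` one has
`e^{-x*/c} = (c/b) e^{-x*/b}` and `e^{-x*/b} = (c/b)^{-c/a}`. Substituting
`u = e^{-(x - x*)/c}`, the strict inequality `f x < f x*` becomes `c u - b u^{c/b} < c - b`,
which is the strict Bernoulli inequality for the exponent `c/b > 1`; no derivative is needed. -/

/-- The strict Bernoulli inequality `1 + (c/b)(u - 1) < u^{c/b}` at `u = e^{-t/c}`. -/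
lemma bernoulli_exp {b c t : ℝ} (hb : 0 < b) (hbc : b < c) (ht : t ≠ 0) :
    c * exp (-t / c) - b * exp (-t / b) < c - b := by
  have hc : 0 < c := hb.trans hbc
  have hu : exp (-t / c) - 1 ≠ 0 := by
    rw [sub_ne_zero, Ne, exp_eq_one_iff]
    exact div_ne_zero (neg_ne_zero.mpr ht) hc.ne'
  have h := one_add_mul_self_lt_rpow_one_add (s := exp (-t / c) - 1) (p := c / b)
    (by linarith [exp_pos (-t / c)]) hu ((one_lt_div hb).mpr hbc)
  rw [add_sub_cancel, ← exp_mul, show -t / c * (c / b) = -t / b by field_simp] at h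
  have h2 := mul_lt_mul_of_pos_left h hb
  have h3 : b * (1 + c / b * (exp (-t / c) - 1)) = b + c * (exp (-t / c) - 1) := by
    field_simp
  linarith

/-- The density as a difference of exponentials centred at `x*`. -/
lemma density_eq {a b c : ℝ} (ha : 0 < a) (hb : 0 < b) (hc : c = a + b) (x : ℝ) :
    (1 / a) * (exp (x * a / (b * c)) - 1) * exp (-x / b) =
      (c / b) ^ (-c / a) / (a * b) *
        (c * exp (-(x - b * c * log (c / b) / a) / c)
          - b * exp (-(x - b * c * log (c / b) / a) / b)) := by
  have hc0 : 0 < c := by linarith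
  have hcb : 0 < c / b := div_pos hc0 hb
  have e1 : exp (x * a / (b * c)) * exp (-x / b) = exp (-x / c) := by
    rw [← exp_add]
    congr 1
    field_simp
    rw [hc]
    ring
  have e2 : (c / b) ^ (-c / a) * exp (-(x - b * c * log (c / b) / a) / b) = exp (-x / b) := by
    rw [rpow_def_of_pos hcb, ← exp_add]
    congr 1
    field_simp
    ring
  have e3 : (c / b) ^ (-c / a) * (c / b) * exp (-(x - b * c * log (c / b) / a) / c)
      = exp (-x / c) := by
    nth_rewrite 2 [← exp_log hcb]
    rw [rpow_def_of_pos hcb, ← exp_add, ← exp_add]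
    congr 1
    generalize log (c / b) = L
    field_simp
    rw [hc]
    ring
  calc (1 / a) * (exp (x * a / (b * c)) - 1) * exp (-x / b)
      = (1 / a) * (exp (x * a / (b * c)) * exp (-x / b) - exp (-x / b)) := by ring
    _ = (1 / a) * (exp (-x / c) - exp (-x / b)) := by rw [e1]
    _ = _ := by
      rw [← e2, ← e3]
      field_simp

/-- For `n ≥ 3`, the exponential-case density `fₙ` has a unique maximum on `(0, ∞)` at
`xₙ* = a_{n-1} aₙ ln(aₙ/(aₙ - a_{n-2})) / a_{n-2}`, with maximum value
`Mₙ = (aₙ - a_{n-2})⁻¹ (aₙ/(aₙ - a_{n-2}))^{-aₙ/a_{n-2}}`. -/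
theorem fsrv_exponential_density_mode (n : ℕ) (hn : 3 ≤ n)
    (f : ℝ → ℝ)
    (hf : f = fun x => if 0 ≤ x then
      (1 / (Nat.fib (n - 2) : ℝ)) *
        (Real.exp (x * (Nat.fib (n - 2) : ℝ) / ((Nat.fib (n - 1) : ℝ) * (Nat.fib n : ℝ))) - 1) *
        Real.exp (-x / (Nat.fib (n - 1) : ℝ))
      else 0)
    (xstar : ℝ)
    (hxstar : xstar = (Nat.fib (n - 1) : ℝ) * (Nat.fib n : ℝ) *
      Real.log ((Nat.fib n : ℝ) / ((Nat.fib n : ℝ) - (Nat.fib (n - 2) : ℝ))) /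
        (Nat.fib (n - 2) : ℝ)) :
    xstar ∈ Set.Ioi (0 : ℝ) ∧
    IsMaxOn f (Set.Ioi (0 : ℝ)) xstar ∧
    (∀ x ∈ Set.Ioi (0 : ℝ), x ≠ xstar → f x < f xstar) ∧
    f xstar = (1 / ((Nat.fib n : ℝ) - (Nat.fib (n - 2) : ℝ))) *
      ((Nat.fib n : ℝ) / ((Nat.fib n : ℝ) - (Nat.fib (n - 2) : ℝ)))
        ^ (-(Nat.fib n : ℝ) / (Nat.fib (n - 2) : ℝ)) := by
  have hsum : (Nat.fib n : ℝ) = Nat.fib (n - 2) + Nat.fib (n - 1) := by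
    obtain ⟨m, rfl⟩ : ∃ m, n = m + 2 := ⟨n - 2, by omega⟩
    exact_mod_cast Nat.fib_add_two
  have ha : (0 : ℝ) < Nat.fib (n - 2) := by exact_mod_cast Nat.fib_pos.mpr (by omega)
  have hb : (0 : ℝ) < Nat.fib (n - 1) := by exact_mod_cast Nat.fib_pos.mpr (by omega)
  generalize (Nat.fib n : ℝ) = c at *
  generalize (Nat.fib (n - 2) : ℝ) = a at *
  generalize (Nat.fib (n - 1) : ℝ) = b at *
  have hca : c - a = b := by linarith
  rw [hca] at hxstar ⊢
  have hc : 0 < c := by linarith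
  have hbc : b < c := by linarith
  have hM : 0 < (c / b) ^ (-c / a) := rpow_pos_of_pos (div_pos hc hb) _
  have hpos : 0 < xstar := by
    have := log_pos ((one_lt_div hb).mpr hbc)
    rw [hxstar]
    positivity
  have hfx : ∀ x, 0 < x → f x = (c / b) ^ (-c / a) / (a * b) *
      (c * exp (-(x - xstar) / c) - b * exp (-(x - xstar) / b)) := by
    intro x hx
    simp only [hf, if_pos hx.le]
    rw [density_eq ha hb hsum, ← hxstar]
  have hfs : f xstar = (c / b) ^ (-c / a) / (a * b) * (c - b) := by
    rw [hfx _ hpos]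
    simp
  have hlt : ∀ x ∈ Set.Ioi (0 : ℝ), x ≠ xstar → f x < f xstar := by
    intro x hx hne
    rw [hfs, hfx x hx]
    exact mul_lt_mul_of_pos_left (bernoulli_exp hb hbc (sub_ne_zero.mpr hne)) (by positivity)
  refine ⟨hpos, ?_, hlt, ?_⟩
  · intro x hx
    rcases eq_or_ne x xstar with h | h
    · exact (congrArg f h).le
    · exact (hlt x hx h).le
  · rw [hfs, show c - b = a by linarith]
    field_simp
end

section
/- Let (aₙ) be the Fibonacci sequence and for n ≥ 3 define Mₙ = (1/(aₙ − a_{n-2})) · ( aₙ/(aₙ − a_{n-2}) )^{−aₙ/a_{n-2}} (the maximum of the density of Xₙ when X₀, X₁ are iid exponential(1)). Then the sequence Mₙ/M_{n+1} converges to the golden ratio φ = (1 + √5)/2 as n → ∞. -/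
open Filter Real

/-!
With `r m = F (m+1) / F m → φ`, the formula for the maximum becomes `M (m+3) = G m / F (m+2)`, where
`G m = r (m+2) ^ (-(r (m+2) * r (m+1)))`. Hence `M (m+3) / M (m+4) = r (m+2) * (G m / G (m+1))`.
Since `φ ≠ 0`, the power is jointly continuous at `(φ, -φ²)`, so `G` converges to `φ ^ (-φ²) ≠ 0`;
therefore `G m / G (m+1) → 1`, and the ratio of maxima has the same limit `φ` as `r`.
-/

/-- The ratio of consecutive Fibonacci numbers, with the junk value `0` at `m = 0`. -/
noncomputable def fibRatio (m : ℕ) : ℝ := (Nat.fib (m + 1) : ℝ) / Nat.fib m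

/-- The maximum of the density of index `m + 3`, multiplied by the Fibonacci number `F (m + 2)`. -/
noncomputable def normalizedMax (m : ℕ) : ℝ :=
  fibRatio (m + 2) ^ (-(fibRatio (m + 2) * fibRatio (m + 1)))

lemma fib_cast_pos (m : ℕ) : (0 : ℝ) < Nat.fib (m + 1) :=
  Nat.cast_pos.2 (Nat.fib_pos.2 m.succ_pos)

lemma normalizedMax_pos (m : ℕ) : 0 < normalizedMax m :=
  rpow_pos_of_pos (div_pos (fib_cast_pos (m + 2)) (fib_cast_pos (m + 1))) _

lemma tendsto_fibRatio : Tendsto fibRatio atTop (nhds goldenRatio) :=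
  tendsto_fib_succ_div_fib_atTop

lemma tendsto_normalizedMax :
    Tendsto normalizedMax atTop (nhds (goldenRatio ^ (-(goldenRatio * goldenRatio)))) := by
  have h1 := tendsto_fibRatio.comp (tendsto_add_atTop_nat 1)
  have h2 := tendsto_fibRatio.comp (tendsto_add_atTop_nat 2)
  exact h2.rpow (h2.mul h1).neg (Or.inl goldenRatio_ne_zero)

lemma max_formula_eq (m : ℕ) :
    (1 / ((Nat.fib (m + 3) : ℝ) - (Nat.fib (m + 3 - 2) : ℝ))) *
        ((Nat.fib (m + 3) : ℝ) / ((Nat.fib (m + 3) : ℝ) - (Nat.fib (m + 3 - 2) : ℝ)))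
          ^ (-(Nat.fib (m + 3) : ℝ) / (Nat.fib (m + 3 - 2) : ℝ))
      = normalizedMax m / Nat.fib (m + 2) := by
  have hsub : (Nat.fib (m + 3) : ℝ) - (Nat.fib (m + 3 - 2) : ℝ) = Nat.fib (m + 2) := by
    have h : Nat.fib (m + 3) = Nat.fib (m + 1) + Nat.fib (m + 2) := Nat.fib_add_two
    rw [h, show m + 3 - 2 = m + 1 from rfl]
    push_cast
    ring
  have hexp : -(Nat.fib (m + 3) : ℝ) / (Nat.fib (m + 3 - 2) : ℝ)
      = -(fibRatio (m + 2) * fibRatio (m + 1)) := by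
    rw [show m + 3 - 2 = m + 1 from rfl, neg_div]
    exact congrArg Neg.neg (div_mul_div_cancel₀ (fib_cast_pos (m + 1)).ne').symm
  rw [hsub, hexp, one_div_mul_eq_div]
  rfl

/-- The ratio `Mₙ/M_{n+1}` of the maxima of the exponential-case densities converges to the
golden ratio `φ = (1 + √5)/2`. -/
theorem fsrv_density_max_ratio_tendsto_goldenRatio (M : ℕ → ℝ)
    (hM : ∀ n : ℕ, 3 ≤ n → M n =
      (1 / ((Nat.fib n : ℝ) - (Nat.fib (n - 2) : ℝ))) *
        ((Nat.fib n : ℝ) / ((Nat.fib n : ℝ) - (Nat.fib (n - 2) : ℝ)))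
          ^ (-(Nat.fib n : ℝ) / (Nat.fib (n - 2) : ℝ))) :
    Tendsto (fun n => M n / M (n + 1)) atTop (nhds ((1 + Real.sqrt 5) / 2)) := by
  have hM' (m : ℕ) : M (m + 3) = normalizedMax m / Nat.fib (m + 2) :=
    (hM (m + 3) (Nat.le_add_left 3 m)).trans (max_formula_eq m)
  rw [← tendsto_add_atTop_iff_nat 3]
  have hlim : Tendsto (fun m => fibRatio (m + 2) * (normalizedMax m / normalizedMax (m + 1))) atTop
      (nhds goldenRatio) := by
    have hne := (rpow_pos_of_pos goldenRatio_pos (-(goldenRatio * goldenRatio))).ne'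
    have h := (tendsto_fibRatio.comp (tendsto_add_atTop_nat 2)).mul
      (tendsto_normalizedMax.div (tendsto_normalizedMax.comp (tendsto_add_atTop_nat 1)) hne)
    rwa [div_self hne, mul_one] at h
  refine hlim.congr fun m => ?_
  have hM1 : M (m + 3 + 1) = normalizedMax (m + 1) / Nat.fib (m + 3) := hM' (m + 1)
  have h2 := (fib_cast_pos (m + 1)).ne'
  have h3 := (fib_cast_pos (m + 2)).ne'
  have hG := (normalizedMax_pos (m + 1)).ne'
  rw [hM', hM1, fibRatio]
  field_simp
end

section
/- Let (aₙ) be the Fibonacci sequence and for n ≥ 3 define xₙ* = a_{n-1}·aₙ·ln( aₙ/(aₙ − a_{n-2}) ) / a_{n-2} (the mode of Xₙ when X₀, X₁ are iid exponential(1)). Then the sequence x_{n+1}*/xₙ* converges to the golden ratio φ = (1 + √5)/2 as n → ∞. -/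
/-!
Write `r k = F (k + 1) / F k`, which tends to the golden ratio `φ`. Since `F n - F (n - 2) = F (n - 1)`,
the mode is `x n = F n * g n` with `g n = r (n - 2) * log (r (n - 1))`, and `g` tends to
`φ * log φ`, which is nonzero because `φ > 1`. Hence `x (n + 1) / x n = r n * (g (n + 1) / g n)`
tends to `φ * 1`.
-/

open Filter Real

/-- The ratio `x_{n+1}*/xₙ*` of the modes of the exponential-case densities converges to the
golden ratio `φ = (1 + √5)/2`. -/
theorem fsrv_mode_ratio_tendsto_goldenRatio (xstar : ℕ → ℝ)
    (hxstar : ∀ n : ℕ, 3 ≤ n → xstar n =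
      (Nat.fib (n - 1) : ℝ) * (Nat.fib n : ℝ) *
        Real.log ((Nat.fib n : ℝ) / ((Nat.fib n : ℝ) - (Nat.fib (n - 2) : ℝ))) /
          (Nat.fib (n - 2) : ℝ)) :
    Tendsto (fun n => xstar (n + 1) / xstar n) atTop (nhds ((1 + Real.sqrt 5) / 2)) := by
  change Tendsto _ _ (nhds goldenRatio)
  let r : ℕ → ℝ := fun k => (Nat.fib (k + 1) : ℝ) / Nat.fib k
  have hr : Tendsto r atTop (nhds goldenRatio) := tendsto_fib_succ_div_fib_atTop
  let g : ℕ → ℝ := fun m => r (m + 1) * Real.log (r (m + 2))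
  have hx : ∀ m, xstar (m + 3) = Nat.fib (m + 3) * g m := by
    intro m
    have hfib : (Nat.fib (m + 3) : ℝ) - Nat.fib (m + 1) = Nat.fib (m + 2) := by
      have h : Nat.fib (m + 3) = Nat.fib (m + 1) + Nat.fib (m + 2) := Nat.fib_add_two
      rw [h]; push_cast; ring
    rw [hxstar (m + 3) (by omega), show m + 3 - 1 = m + 2 by omega,
      show m + 3 - 2 = m + 1 by omega, hfib]
    simp only [g, r]
    ring
  have hlog : Real.log goldenRatio ≠ 0 := (Real.log_pos one_lt_goldenRatio).ne'
  have hg : Tendsto g atTop (nhds (goldenRatio * Real.log goldenRatio)) :=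
    (hr.comp (tendsto_add_atTop_nat 1)).mul
      ((hr.comp (tendsto_add_atTop_nat 2)).log goldenRatio_ne_zero)
  have hne : goldenRatio * Real.log goldenRatio ≠ 0 := mul_ne_zero goldenRatio_ne_zero hlog
  have hquot : Tendsto (fun m => g (m + 1) / g m) atTop (nhds 1) := by
    have h := (hg.comp (tendsto_add_atTop_nat 1)).div hg hne
    rwa [div_self hne] at h
  rw [← tendsto_add_atTop_iff_nat 3]
  have h := (hr.comp (tendsto_add_atTop_nat 3)).mul hquot
  rw [mul_one] at h
  refine h.congr fun m => ?_
  rw [hx m, show m + 3 + 1 = m + 1 + 3 by omega, hx (m + 1)]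
  exact (mul_div_mul_comm (Nat.fib (m + 1 + 3) : ℝ) (g (m + 1)) (Nat.fib (m + 3)) (g m)).symm
end

section
/- Let X₀ and X₁ be independent random variables, each uniformly distributed on (0,1), and let (aₙ) be the Fibonacci sequence. For every n ≥ 3, the random variable Xₙ = a_{n-1}·X₀ + aₙ·X₁ has probability density function fₙ given by: fₙ(x) = 0 for x < 0 or x > aₙ + a_{n-1}; fₙ(x) = x/(aₙ·a_{n-1}) for 0 ≤ x ≤ a_{n-1}; fₙ(x) = 1/aₙ for a_{n-1} ≤ x ≤ aₙ; and fₙ(x) = (1/aₙ)·(1 − (x − aₙ)/a_{n-1}) for aₙ ≤ x ≤ aₙ + a_{n-1}. -/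
/-!
The law of `b X₀ + c X₁` with `0 < b ≤ c` is the convolution of the uniform laws on `(0, b)` and
`(0, c)`, so its density at `x` is `(b c)⁻¹` times the length of `(0, b) ∩ (x - c, x)`, that is
`(b c)⁻¹ * (min b x - max 0 (x - c))⁺`. Splitting according to the position of `x` relative to
`0 < b ≤ c` gives the trapezoid. The Fibonacci numbers enter only through
`0 < fib (n - 1) ≤ fib n`.
-/

open MeasureTheory ProbabilityTheory

lemma map_const_mul_restrict_Ioo {b : ℝ} (hb : 0 < b) :
    Measure.map (fun x => b * x) ((volume : Measure ℝ).restrict (Set.Ioo 0 1))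
      = ENNReal.ofReal b⁻¹ • (volume : Measure ℝ).restrict (Set.Ioo 0 b) := by
  have hpre : Set.Ioo (0 : ℝ) 1 = (fun x => b * x) ⁻¹' Set.Ioo 0 b := by
    rw [Set.preimage_const_mul_Ioo₀ _ _ hb]
    simp [hb.ne']
  rw [hpre, ← Measure.restrict_map (by fun_prop) measurableSet_Ioo,
    Real.map_volume_mul_left hb.ne', abs_of_pos (inv_pos.2 hb), Measure.restrict_smul]

/-- The density of the convolution of the Lebesgue measures on `(0, b)` and `(0, c)` is the
length of an intersection of two intervals. -/
lemma lconvolution_indicator_Ioo (b c x : ℝ) :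
    lconvolution ((Set.Ioo 0 b).indicator 1) ((Set.Ioo 0 c).indicator 1) volume x
      = ENNReal.ofReal (min b x - max 0 (x - c)) := by
  rw [lconvolution_def]
  have h (y : ℝ) : (Set.Ioo 0 b).indicator (1 : ℝ → ENNReal) y
        * (Set.Ioo 0 c).indicator 1 (-y + x)
      = (Set.Ioo (max 0 (x - c)) (min b x)).indicator 1 y := by
    have hy : y ∈ Set.Ioo (max 0 (x - c)) (min b x)
        ↔ y ∈ Set.Ioo 0 b ∧ -y + x ∈ Set.Ioo 0 c := by
      simp only [Set.mem_Ioo, max_lt_iff, lt_min_iff]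
      constructor
      · rintro ⟨⟨h1, h2⟩, h3, h4⟩
        exact ⟨⟨h1, h3⟩, by linarith, by linarith⟩
      · rintro ⟨⟨h1, h2⟩, h3, h4⟩
        exact ⟨⟨h1, by linarith⟩, h2, by linarith⟩
    classical
    simp only [Set.indicator_apply, hy]
    by_cases h1 : y ∈ Set.Ioo 0 b <;> by_cases h2 : -y + x ∈ Set.Ioo 0 c <;> simp [h1, h2]
  simp_rw [h]
  rw [lintegral_indicator_one measurableSet_Ioo, Real.volume_Ioo]

lemma trapezoid_eq {b c : ℝ} (hb : 0 < b) (hbc : b ≤ c) (x : ℝ) :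
    ENNReal.ofReal (b⁻¹ * c⁻¹) * ENNReal.ofReal (min b x - max 0 (x - c))
      = ENNReal.ofReal (if x < 0 then 0
           else if x ≤ b then x / (c * b)
           else if x ≤ c then 1 / c
           else if x ≤ c + b then (1 / c) * (1 - (x - c) / b)
           else 0) := by
  have hc : 0 < c := hb.trans_le hbc
  rw [← ENNReal.ofReal_mul (by positivity)]
  split_ifs with h1 h2 h3 h4
  · rw [ENNReal.ofReal_zero, ENNReal.ofReal_eq_zero]
    refine mul_nonpos_of_nonneg_of_nonpos (by positivity) ?_
    linarith [min_le_right b x, le_max_left 0 (x - c)]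
  · rw [min_eq_right h2, max_eq_left (by linarith)]
    congr 1
    field_simp
    ring
  · rw [min_eq_left (by linarith), max_eq_left (by linarith)]
    congr 1
    field_simp
    ring
  · rw [min_eq_left (by linarith), max_eq_right (by linarith)]
    congr 1
    field_simp
  · rw [ENNReal.ofReal_zero, ENNReal.ofReal_eq_zero]
    refine mul_nonpos_of_nonneg_of_nonpos (by positivity) ?_
    linarith [min_le_left b x, le_max_right 0 (x - c)]

/-- The pdf of `Xₙ = a_{n-1} X₀ + aₙ X₁` when `X₀, X₁` are iid uniform on `(0,1)`:
a trapezoidal density. -/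
theorem fsrv_pdf_uniform {Ω : Type*} [MeasurableSpace Ω] (P : Measure Ω)
    [IsProbabilityMeasure P]
    (X₀ X₁ : Ω → ℝ) (hX₀ : Measurable X₀) (hX₁ : Measurable X₁)
    (hindep : IndepFun X₀ X₁ P)
    (hdist₀ : Measure.map X₀ P = (volume : Measure ℝ).restrict (Set.Ioo 0 1))
    (hdist₁ : Measure.map X₁ P = (volume : Measure ℝ).restrict (Set.Ioo 0 1))
    (n : ℕ) (hn : 3 ≤ n) :
    Measure.map (fun ω => (Nat.fib (n - 1) : ℝ) * X₀ ω + (Nat.fib n : ℝ) * X₁ ω) P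
      = (volume : Measure ℝ).withDensity (fun x => ENNReal.ofReal
          (if x < 0 then 0
           else if x ≤ (Nat.fib (n - 1) : ℝ) then x / ((Nat.fib n : ℝ) * (Nat.fib (n - 1) : ℝ))
           else if x ≤ (Nat.fib n : ℝ) then 1 / (Nat.fib n : ℝ)
           else if x ≤ (Nat.fib n : ℝ) + (Nat.fib (n - 1) : ℝ) then
             (1 / (Nat.fib n : ℝ)) * (1 - (x - (Nat.fib n : ℝ)) / (Nat.fib (n - 1) : ℝ))
           else 0)) := by
  have hb : (0 : ℝ) < Nat.fib (n - 1) := by exact_mod_cast Nat.fib_pos.2 (by omega)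
  have hbc : (Nat.fib (n - 1) : ℝ) ≤ Nat.fib n := by exact_mod_cast Nat.fib_mono (by omega)
  have hc := hb.trans_le hbc
  generalize (Nat.fib (n - 1) : ℝ) = b at *
  generalize (Nat.fib n : ℝ) = c at *
  have law {X : Ω → ℝ} (hX : Measurable X) {a : ℝ} (ha : 0 < a)
      (hdist : Measure.map X P = (volume : Measure ℝ).restrict (Set.Ioo 0 1)) :
      Measure.map (fun ω => a * X ω) P = ENNReal.ofReal a⁻¹ •
        (volume : Measure ℝ).withDensity ((Set.Ioo 0 a).indicator 1) := by
    rw [withDensity_indicator_one measurableSet_Ioo, ← map_const_mul_restrict_Ioo ha, ← hdist,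
      Measure.map_map (by fun_prop) hX]
    rfl
  have hind : IndepFun (fun ω => b * X₀ ω) (fun ω => c * X₁ ω) P :=
    hindep.comp (φ := fun x => b * x) (ψ := fun x => c * x) (by fun_prop) (by fun_prop)
  have hm (a : ℝ) : Measurable ((Set.Ioo 0 a).indicator (1 : ℝ → ENNReal)) :=
    measurable_one.indicator measurableSet_Ioo
  have hsum := hind.map_add_eq_map_conv_map (by fun_prop) (by fun_prop)
  rw [law hX₀ hb hdist₀, law hX₁ hc hdist₁] at hsum
  refine hsum.trans ?_
  rw [Measure.conv_smul_left, Measure.conv_smul_right, smul_smul,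
    conv_withDensity_eq_lconvolution (hm b) (hm c),
    ← ENNReal.ofReal_mul (by positivity),
    ← withDensity_smul _ (measurable_lconvolution _ (hm b) (hm c))]
  congr 1
  funext x
  rw [Pi.smul_apply, smul_eq_mul, lconvolution_indicator_Ioo, trapezoid_eq hb hbc]
end

section
/- Let (aₙ) be the Fibonacci sequence, φ = (1 + √5)/2 the golden ratio, and let x₀, x₁ be real numbers with x₀ + φ·x₁ ≠ 0. Then there exists N such that for all n ≥ N the quantity a_{n-1}·x₀ + aₙ·x₁ is nonzero, and the sequence zₙ = (aₙ·x₀ + a_{n+1}·x₁)/(a_{n-1}·x₀ + aₙ·x₁) converges to φ as n → ∞. In particular, for the FSRV Xₙ = a_{n-1}·X₀ + aₙ·X₁, the ratio X_{n+1}(ω)/Xₙ(ω) converges pointwise to φ on the event {ω : X₀(ω) + φ·X₁(ω) ≠ 0}. -/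
/-!
Write `u m = a_m x₀ + a_{m+1} x₁`. Since `a_{m+1} / a_m → φ`, the normalised sequence `u m / a_m`
converges to `L = x₀ + φ x₁ ≠ 0`. Hence `u m` is eventually nonzero, and
`u (m+1) / u m = (u (m+1) / a_{m+1}) * (a_{m+1} / a_m) / (u m / a_m) → L * φ / L = φ`.
The claims follow by the shift `n = m + 1`, which removes the truncated subtraction `n - 1`.
-/

open Filter Real

lemma tendsto_fsrv_div_fib (x y : ℝ) :
    Tendsto (fun m : ℕ => ((Nat.fib m : ℝ) * x + (Nat.fib (m + 1) : ℝ) * y) / (Nat.fib m : ℝ))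
      atTop (nhds (x + ((1 + Real.sqrt 5) / 2) * y)) := by
  refine ((tendsto_fib_succ_div_fib_atTop.mul_const y).const_add x).congr' ?_
  filter_upwards [eventually_gt_atTop 0] with m hm
  have hf : (Nat.fib m : ℝ) ≠ 0 := by exact_mod_cast (Nat.fib_pos.2 hm).ne'
  field_simp

lemma eventually_fsrv_ne_zero (x y : ℝ) (h : x + ((1 + Real.sqrt 5) / 2) * y ≠ 0) :
    ∀ᶠ m : ℕ in atTop, (Nat.fib m : ℝ) * x + (Nat.fib (m + 1) : ℝ) * y ≠ 0 := by
  filter_upwards [(tendsto_fsrv_div_fib x y).eventually_ne h] with m hm h0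
  exact hm (by rw [h0, zero_div])

lemma tendsto_fsrv_ratio (x y : ℝ) (h : x + ((1 + Real.sqrt 5) / 2) * y ≠ 0) :
    Tendsto (fun n : ℕ =>
        ((Nat.fib n : ℝ) * x + (Nat.fib (n + 1) : ℝ) * y) /
        ((Nat.fib (n - 1) : ℝ) * x + (Nat.fib n : ℝ) * y))
      atTop (nhds ((1 + Real.sqrt 5) / 2)) := by
  rw [← tendsto_add_atTop_iff_nat 1]
  have hu := tendsto_fsrv_div_fib x y
  have key := (((tendsto_add_atTop_iff_nat 1).2 hu).mul tendsto_fib_succ_div_fib_atTop).div hu h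
  rw [mul_div_cancel_left₀ _ h] at key
  refine key.congr' ?_
  filter_upwards [eventually_gt_atTop 0, eventually_fsrv_ne_zero x y h] with m hm hne
  have hf : (Nat.fib m : ℝ) ≠ 0 := by exact_mod_cast (Nat.fib_pos.2 hm).ne'
  have hf' : (Nat.fib (m + 1) : ℝ) ≠ 0 := by exact_mod_cast (Nat.fib_pos.2 m.succ_pos).ne'
  simp only [Pi.div_apply, Nat.add_sub_cancel]
  field_simp

/-- If `x₀ + φ x₁ ≠ 0` then eventually `a_{n-1} x₀ + aₙ x₁ ≠ 0` and the ratio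
`zₙ = (aₙ x₀ + a_{n+1} x₁)/(a_{n-1} x₀ + aₙ x₁)` converges to the golden ratio `φ`.
In particular, for the FSRV `Xₙ = a_{n-1} X₀ + aₙ X₁`, the ratio `X_{n+1}(ω)/Xₙ(ω)`
converges pointwise to `φ` on `{ω : X₀(ω) + φ X₁(ω) ≠ 0}`. -/
theorem fsrv_ratio_tendsto_goldenRatio (x₀ x₁ : ℝ)
    (h : x₀ + ((1 + Real.sqrt 5) / 2) * x₁ ≠ 0)
    {Ω : Type*} (X₀ X₁ : Ω → ℝ) :
    (∃ N : ℕ, ∀ n ≥ N, (Nat.fib (n - 1) : ℝ) * x₀ + (Nat.fib n : ℝ) * x₁ ≠ 0) ∧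
    Tendsto (fun n : ℕ =>
        ((Nat.fib n : ℝ) * x₀ + (Nat.fib (n + 1) : ℝ) * x₁) /
        ((Nat.fib (n - 1) : ℝ) * x₀ + (Nat.fib n : ℝ) * x₁))
      atTop (nhds ((1 + Real.sqrt 5) / 2)) ∧
    (∀ ω : Ω, X₀ ω + ((1 + Real.sqrt 5) / 2) * X₁ ω ≠ 0 →
      Tendsto (fun n : ℕ =>
          ((Nat.fib n : ℝ) * X₀ ω + (Nat.fib (n + 1) : ℝ) * X₁ ω) /
          ((Nat.fib (n - 1) : ℝ) * X₀ ω + (Nat.fib n : ℝ) * X₁ ω))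
        atTop (nhds ((1 + Real.sqrt 5) / 2))) := by
  refine ⟨?_, tendsto_fsrv_ratio x₀ x₁ h, fun ω hω => tendsto_fsrv_ratio _ _ hω⟩
  obtain ⟨N, hN⟩ := eventually_atTop.1 (eventually_fsrv_ne_zero x₀ x₁ h)
  refine ⟨N + 1, fun n hn => ?_⟩
  obtain ⟨m, rfl⟩ : ∃ m, n = m + 1 := ⟨n - 1, by omega⟩
  exact hN m (by omega)
end

section
/- Let X₀ and X₁ be random variables on a probability space Ω such that the pair (X₀, X₁) : Ω → ℝ² has a joint probability density function f with respect to Lebesgue measure on ℝ². Let (aₙ) be the Fibonacci sequence, fix n ≥ 2 and k ≥ 1, and let Xₙ = a_{n-1}·X₀ + aₙ·X₁ and X_{n+k} = a_{n+k-1}·X₀ + a_{n+k}·X₁. Then the pair (Xₙ, X_{n+k}) : Ω → ℝ² has joint probability density function given (for almost every (y₀, y₁)) by (y₀, y₁) ↦ (1/a_k) · f( (a_{n+k}·y₀ − aₙ·y₁)/((−1)ⁿ·a_k), (a_{n-1}·y₁ − a_{n+k-1}·y₀)/((−1)ⁿ·a_k) ). -/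
/-!
The map `(x₀, x₁) ↦ (a_{n-1} x₀ + aₙ x₁, a_{n+k-1} x₀ + a_{n+k} x₁)` is linear, and by d'Ocagne's
identity (`fib_docagne`) its determinant is `(-1)ⁿ a_k`, which is nonzero as `k ≥ 1`. An invertible
linear map of the plane rescales Lebesgue measure by `|det|⁻¹`, so it carries a density `F` to
`|det|⁻¹ F ∘ g⁻¹` (`map_withDensity_linear`); Cramer's rule gives the inverse, and
`|(-1)ⁿ a_k| = a_k`.
-/

open MeasureTheory ProbabilityTheory

/-- **d'Ocagne's identity**, with the index shifted by one to avoid truncated subtraction. -/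
theorem fib_docagne (m k : ℕ) :
    (Nat.fib m : ℝ) * Nat.fib (m + k + 1) - (Nat.fib (m + 1) : ℝ) * Nat.fib (m + k)
      = (-1) ^ (m + 1) * Nat.fib k := by
  induction m with
  | zero => simp
  | succ m ih =>
    have h₁ : Nat.fib (m + 1 + k + 1) = Nat.fib (m + k) + Nat.fib (m + k + 1) := by
      rw [← Nat.fib_add_two]
      congr 1
      ring
    have h₂ : m + 1 + k = m + k + 1 := by ring
    rw [h₁, h₂, Nat.fib_add_two, pow_succ]
    push_cast
    linear_combination -ih

/-- Change of variables for a density on the plane under the linear map with matrix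
`!![a, b; c, d]`; the inverse map is written out by Cramer's rule. -/
theorem map_withDensity_linear (a b c d D : ℝ) (hD : a * d - b * c = D) (hD0 : D ≠ 0)
    (F : ℝ × ℝ → ENNReal) (hF : Measurable F) :
    Measure.map (fun p : ℝ × ℝ => (a * p.1 + b * p.2, c * p.1 + d * p.2))
        ((volume : Measure (ℝ × ℝ)).withDensity F)
      = (volume : Measure (ℝ × ℝ)).withDensity (fun y => ENNReal.ofReal |D⁻¹| *
          F ((d * y.1 - b * y.2) / D, (a * y.2 - c * y.1) / D)) := by
  set g : ℝ × ℝ → ℝ × ℝ := fun p => (a * p.1 + b * p.2, c * p.1 + d * p.2) with hg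
  have hg_meas : Measurable g := by fun_prop
  have hvol : Measure.map g volume = ENNReal.ofReal |D⁻¹| • (volume : Measure (ℝ × ℝ)) := by
    let L := Matrix.toLin (Module.Basis.finTwoProd ℝ) (Module.Basis.finTwoProd ℝ) !![a, b; c, d]
    have hdet : LinearMap.det L = D := by
      rw [LinearMap.det_toLin, Matrix.det_fin_two_of, hD]
    have hL : (L : ℝ × ℝ → ℝ × ℝ) = g := by
      funext p
      exact Matrix.toLin_finTwoProd_apply a b c d p
    have := Measure.map_linearMap_addHaar_eq_smul_addHaar (volume : Measure (ℝ × ℝ))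
      (f := L) (by rwa [hdet])
    rwa [hdet, hL] at this
  have hG : Measurable fun y : ℝ × ℝ => F ((d * y.1 - b * y.2) / D, (a * y.2 - c * y.1) / D) := by
    fun_prop
  have hinv : ∀ p : ℝ × ℝ,
      F p = F ((d * (g p).1 - b * (g p).2) / D, (a * (g p).2 - c * (g p).1) / D) := by
    intro p
    congr 1
    ext
    · rw [eq_div_iff hD0, ← hD]
      simp only [hg]
      ring
    · rw [eq_div_iff hD0, ← hD]
      simp only [hg]
      ring
  ext s hs
  rw [Measure.map_apply hg_meas hs, withDensity_apply _ (hg_meas hs), withDensity_apply _ hs,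
    lintegral_const_mul _ hG, lintegral_congr hinv, ← setLIntegral_map hs hG hg_meas, hvol,
    Measure.restrict_smul, lintegral_smul_measure, smul_eq_mul]

/-- The joint pdf of `(Xₙ, X_{n+k})` for the FSRV `Xₘ = a_{m-1} X₀ + aₘ X₁`, in terms of the
joint pdf `f` of `(X₀, X₁)`:
`(y₀, y₁) ↦ (1/a_k) f((a_{n+k} y₀ - aₙ y₁)/((-1)ⁿ a_k), (a_{n-1} y₁ - a_{n+k-1} y₀)/((-1)ⁿ a_k))`. -/
theorem fsrv_joint_pdf {Ω : Type*} [MeasurableSpace Ω] (P : Measure Ω)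
    [IsProbabilityMeasure P]
    (X₀ X₁ : Ω → ℝ) (hX₀ : Measurable X₀) (hX₁ : Measurable X₁)
    (f : ℝ × ℝ → ℝ) (hf_meas : Measurable f) (hf_nonneg : ∀ p, 0 ≤ f p)
    (hpdf : Measure.map (fun ω => (X₀ ω, X₁ ω)) P
      = (volume : Measure (ℝ × ℝ)).withDensity (fun p => ENNReal.ofReal (f p)))
    (n k : ℕ) (hn : 2 ≤ n) (hk : 1 ≤ k) :
    Measure.map (fun ω =>
        ((Nat.fib (n - 1) : ℝ) * X₀ ω + (Nat.fib n : ℝ) * X₁ ω,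
         (Nat.fib (n + k - 1) : ℝ) * X₀ ω + (Nat.fib (n + k) : ℝ) * X₁ ω)) P
      = (volume : Measure (ℝ × ℝ)).withDensity (fun y => ENNReal.ofReal
          ((1 / (Nat.fib k : ℝ)) *
            f (((Nat.fib (n + k) : ℝ) * y.1 - (Nat.fib n : ℝ) * y.2) /
                ((-1 : ℝ) ^ n * (Nat.fib k : ℝ)),
              ((Nat.fib (n - 1) : ℝ) * y.2 - (Nat.fib (n + k - 1) : ℝ) * y.1) /
                ((-1 : ℝ) ^ n * (Nat.fib k : ℝ))))) := by
  obtain ⟨m, rfl⟩ : ∃ m, n = m + 1 := ⟨n - 1, by omega⟩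
  have e₁ : m + 1 + k = m + k + 1 := by ring
  simp only [e₁, Nat.add_sub_cancel]
  have hk0 : (0 : ℝ) < Nat.fib k := by exact_mod_cast Nat.fib_pos.2 hk
  have hD0 : (-1 : ℝ) ^ (m + 1) * Nat.fib k ≠ 0 :=
    mul_ne_zero (pow_ne_zero _ (by norm_num)) hk0.ne'
  have habs : |((-1 : ℝ) ^ (m + 1) * Nat.fib k)⁻¹| = 1 / (Nat.fib k : ℝ) := by
    rw [abs_inv, abs_mul, abs_neg_one_pow, one_mul, abs_of_pos hk0, one_div]
  have h := map_withDensity_linear _ _ _ _ _ (fib_docagne m k) hD0 _ hf_meas.ennreal_ofReal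
  rw [← hpdf, Measure.map_map (by fun_prop) (by fun_prop), habs] at h
  simp only [ENNReal.ofReal_mul (one_div_pos.2 hk0).le]
  exact h
end
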